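/- Let f : ℝ → ℂ be Lebesgue integrable on (-T, T) for every T > 0, and suppose there exist constants B ≥ 0 and T₁ > 0 such that (1/T) ∫_{|t|<T} |t·f(t)| dt ≤ B for all T > T₁. Then for every h > 0 and every x ∈ ℝ the function t ↦ f(t) e^{itx} (sin(th)/(th)) is Lebesgue integrable on ℝ. -/

import Mathlib

/-!
Cover the line by the ball `{|t| < T₁}` and the dyadic shells `{2ⁿT₁ ≤ |t| < 2ⁿ⁺¹T₁}`. The kernel is
bounded and continuous, so the integrand is integrable on every bounded interval. On the `n`-th shell
`|sin(th)/(th)| ≤ 1/(|t|h)`, so the integrand is at most `|t f(t)| / ((2ⁿT₁)² h)`; since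
`∫_{|t|<2ⁿ⁺¹T₁} |t f(t)| dt ≤ 2ⁿ⁺¹T₁B`, its integral over the shell is at most `(2B/(T₁h)) 2⁻ⁿ`, which
is summable in `n`.
-/

open MeasureTheory Filter Set

/-- The kernel `sin(t h)/(t h)`, understood to equal `1` at `t = 0`. -/
noncomputable def sincKernel (h t : ℝ) : ℝ :=
  if t = 0 then 1 else Real.sin (t * h) / (t * h)

theorem sincKernel_eq_sinc {h : ℝ} (hh : 0 < h) (t : ℝ) : sincKernel h t = Real.sinc (t * h) := by
  by_cases ht : t = 0
  · simp [sincKernel, ht]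
  · rw [sincKernel, if_neg ht, Real.sinc_of_ne_zero (mul_ne_zero ht hh.ne')]

theorem abs_sincKernel_le {h t : ℝ} (hh : 0 < h) (ht : t ≠ 0) :
    |sincKernel h t| ≤ 1 / (|t| * h) := by
  rw [sincKernel, if_neg ht, abs_div, abs_mul, abs_of_pos hh]
  have : 0 < |t| := abs_pos.mpr ht
  gcongr
  exact Real.abs_sin_le_one _

theorem norm_integrand (f : ℝ → ℂ) (h x t : ℝ) :
    ‖f t * Complex.exp (Complex.I * t * x) * sincKernel h t‖ = ‖f t‖ * |sincKernel h t| := by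
  have : Complex.I * t * x = ((t * x : ℝ) : ℂ) * Complex.I := by push_cast; ring
  rw [norm_mul, norm_mul, this, Complex.norm_exp_ofReal_mul_I, mul_one, Complex.norm_real,
    Real.norm_eq_abs]

theorem integrand_integrableOn {f : ℝ → ℂ} {s : Set ℝ} (hf : IntegrableOn f s) {h : ℝ}
    (hh : 0 < h) (x : ℝ) :
    IntegrableOn (fun t : ℝ => f t * Complex.exp (Complex.I * t * x) * sincKernel h t) s := by
  have hk : Continuous (sincKernel h) := by
    rw [funext (sincKernel_eq_sinc hh)]
    exact Real.continuous_sinc.comp (by fun_prop)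
  refine Integrable.mono hf (hf.aestronglyMeasurable.mul ?_ |>.mul ?_) (.of_forall fun t => ?_)
  · exact Continuous.aestronglyMeasurable (by fun_prop)
  · exact Continuous.aestronglyMeasurable (by fun_prop)
  · rw [norm_integrand, sincKernel_eq_sinc hh]
    exact mul_le_of_le_one_right (norm_nonneg _) (Real.abs_sinc_le_one _)

/-- Away from the origin the `1/|t|` decay of the kernel trades `f t` for `t * f t` at the cost of a
factor `1/t²`; this is what makes the shell integrals decay geometrically. -/
theorem norm_integrand_le (f : ℝ → ℂ) {h : ℝ} (hh : 0 < h) (x : ℝ) {a t : ℝ} (ha : 0 < a)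
    (hat : a ≤ |t|) :
    ‖f t * Complex.exp (Complex.I * t * x) * sincKernel h t‖ ≤
      1 / (a ^ 2 * h) * ‖(t : ℂ) * f t‖ := by
  have ht : 0 < |t| := ha.trans_le hat
  rw [norm_integrand]
  calc ‖f t‖ * |sincKernel h t| ≤ ‖f t‖ * (1 / (|t| * h)) := by
        gcongr
        exact abs_sincKernel_le hh (abs_pos.mp ht)
    _ = 1 / (|t| ^ 2 * h) * ‖(t : ℂ) * f t‖ := by
        rw [norm_mul, Complex.norm_real, Real.norm_eq_abs]
        field_simp
    _ ≤ _ := by gcongr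

theorem integrableOn_id_mul {f : ℝ → ℂ} {T : ℝ} (hf : IntegrableOn f (Ioo (-T) T)) :
    IntegrableOn (fun t : ℝ => (t : ℂ) * f t) (Ioo (-T) T) := by
  refine Integrable.mono (hf.norm.const_mul T)
    (AEStronglyMeasurable.mul (Continuous.aestronglyMeasurable (by fun_prop))
      hf.aestronglyMeasurable) ?_
  filter_upwards [ae_restrict_mem measurableSet_Ioo] with t ht
  have h1 : |t| ≤ |T| := (abs_lt.mpr ht).le.trans (le_abs_self T)
  rw [norm_mul, norm_mul, norm_norm, Complex.norm_real, Real.norm_eq_abs, Real.norm_eq_abs]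
  gcongr

/-- Under local integrability of `f` and the boundedness condition
`(1/T) ∫_{|t|<T} |t f(t)| dt ≤ B` for `T > T₁`, for every `h > 0` and `x ∈ ℝ` the
integrand `t ↦ f(t) e^{itx} (sin(th)/(th))` is Lebesgue integrable on `ℝ`. -/
theorem integrand_integrable
    (f : ℝ → ℂ)
    (hloc : ∀ T > (0 : ℝ), IntegrableOn f (Ioo (-T) T))
    (B : ℝ) (hB : 0 ≤ B) (T₁ : ℝ) (hT₁ : 0 < T₁)
    (hbound : ∀ T > T₁, (1 / T) * ∫ t in Ioo (-T) T, ‖(t : ℂ) * f t‖ ≤ B) :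
    ∀ h > (0 : ℝ), ∀ x : ℝ,
      Integrable (fun t : ℝ => f t * Complex.exp (Complex.I * t * x) * sincKernel h t) := by
  intro h hh x
  set g : ℝ → ℂ := fun t => f t * Complex.exp (Complex.I * t * x) * sincKernel h t
  -- Radii of the dyadic shells; the hypothesis `hbound` applies to `r (n + 1) > T₁`.
  let r : ℕ → ℝ := fun n => 2 ^ n * T₁
  have hr : ∀ n, 0 < r n := fun n => by positivity
  let S : ℕ → Set ℝ := fun n => Ioo (-r (n + 1)) (r (n + 1)) \ Ioo (-r n) (r n)
  have hSm : ∀ n, MeasurableSet (S n) := fun n => measurableSet_Ioo.diff measurableSet_Ioo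
  have hgS : ∀ n, IntegrableOn g (S n) := fun n =>
    (integrand_integrableOn (hloc _ (hr (n + 1))) hh x).mono_set sdiff_subset
  have hint : ∀ n, ∫ t in S n, ‖g t‖ ≤ 2 * B / (T₁ * h) * (1 / 2) ^ n := by
    intro n
    have hF : IntegrableOn (fun t : ℝ => ‖(t : ℂ) * f t‖) (Ioo (-r (n + 1)) (r (n + 1))) :=
      (integrableOn_id_mul (hloc _ (hr (n + 1)))).norm
    have hlt : T₁ < r (n + 1) :=
      lt_mul_of_one_lt_left hT₁ (one_lt_pow₀ one_lt_two n.succ_ne_zero)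
    have hb := hbound _ hlt
    rw [one_div, inv_mul_le_iff₀ (hr _)] at hb
    have hc : 0 ≤ 1 / (r n ^ 2 * h) := by have := hr n; positivity
    calc ∫ t in S n, ‖g t‖ ≤ ∫ t in S n, 1 / (r n ^ 2 * h) * ‖(t : ℂ) * f t‖ := by
          refine setIntegral_mono_on (hgS n).norm ((hF.mono_set sdiff_subset).const_mul _)
            (hSm n) fun t ht => norm_integrand_le f hh x (hr n) ?_
          exact not_lt.mp fun hlt => ht.2 (abs_lt.mp hlt)
      _ = 1 / (r n ^ 2 * h) * ∫ t in S n, ‖(t : ℂ) * f t‖ := integral_const_mul _ _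
      _ ≤ 1 / (r n ^ 2 * h) * ∫ t in Ioo (-r (n + 1)) (r (n + 1)), ‖(t : ℂ) * f t‖ := by
          refine mul_le_mul_of_nonneg_left (setIntegral_mono_set hF ?_ ?_) hc
          · exact .of_forall fun t => norm_nonneg _
          · exact sdiff_subset.eventuallyLE
      _ ≤ 1 / (r n ^ 2 * h) * (r (n + 1) * B) := mul_le_mul_of_nonneg_left hb hc
      _ = 2 * B / (T₁ * h) * (1 / 2) ^ n := by
          simp only [r, one_div, inv_pow]
          field_simp
          ring
  have htail : IntegrableOn g (⋃ n, S n) := by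
    refine integrableOn_iUnion_of_summable_integral_norm hgS ?_
    exact .of_nonneg_of_le (fun n => integral_nonneg fun t => norm_nonneg _) hint
      (summable_geometric_two.mul_left _)
  have hcore : IntegrableOn g (Ioo (-T₁) T₁) := integrand_integrableOn (hloc _ hT₁) hh x
  rw [← integrableOn_univ]
  refine (hcore.union htail).mono_set fun t _ => ?_
  rcases lt_or_ge |t| T₁ with ht | ht
  · exact Or.inl (abs_lt.mp ht)
  · obtain ⟨n, hn1, hn2⟩ := exists_nat_pow_near ((one_le_div hT₁).mpr ht) one_lt_two
    rw [le_div_iff₀ hT₁] at hn1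
    rw [div_lt_iff₀ hT₁] at hn2
    exact Or.inr (mem_iUnion.mpr ⟨n, abs_lt.mp hn2, fun hm => hn1.not_gt (abs_lt.mpr hm)⟩)
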